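/- Fix d ≥ 1 and set n = ⌊d/2⌋. Consider the complex vector space of all maps ψ assigning to each binary quadratic Q = q₀x₁² + 2q₁x₁x₂ + q₂x₂² and each binary form F of order d a binary form ψ(F,Q) of order d, such that (i) ψ(F,Q) is ℂ-linear in F, (ii) each coefficient of ψ(F,Q) is a polynomial function of (q₀,q₁,q₂) and of the coefficients of F which is homogeneous of degree d in (q₀,q₁,q₂), and (iii) ψ(F∘g, Q∘g) = ψ(F,Q)∘g for every g ∈ SL₂(ℂ), where (H∘g)(x₁,x₂) = H(g₁₁x₁+g₁₂x₂, g₂₁x₁+g₂₂x₂). This vector space has dimension n+1 over ℂ. -/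

import Mathlib

open MvPolynomial Finset

/-- The substitution action `(H∘g)(x₁,x₂) = H(g₁₁x₁+g₁₂x₂, g₂₁x₁+g₂₂x₂)`. -/
noncomputable def act (g : Matrix (Fin 2) (Fin 2) ℂ) (F : MvPolynomial (Fin 2) ℂ) :
    MvPolynomial (Fin 2) ℂ :=
  aeval (fun i => C (g i 0) * X 0 + C (g i 1) * X 1) F

/-- The coefficient triple of `Q∘g`, where `Q = q₀x₁² + 2q₁x₁x₂ + q₂x₂²` has coefficient
triple `q = (q₀,q₁,q₂)`. -/
noncomputable def qact (g : Matrix (Fin 2) (Fin 2) ℂ) (q : Fin 3 → ℂ) : Fin 3 → ℂ :=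
  ![q 0 * g 0 0 ^ 2 + 2 * q 1 * g 0 0 * g 1 0 + q 2 * g 1 0 ^ 2,
    q 0 * g 0 0 * g 0 1 + q 1 * (g 0 0 * g 1 1 + g 0 1 * g 1 0) + q 2 * g 1 0 * g 1 1,
    q 0 * g 0 1 ^ 2 + 2 * q 1 * g 0 1 * g 1 1 + q 2 * g 1 1 ^ 2]

/-- The space `S_d` of binary forms of order `d`. -/
noncomputable abbrev Sd (d : ℕ) : Submodule ℂ (MvPolynomial (Fin 2) ℂ) :=
  homogeneousSubmodule (Fin 2) ℂ d

/-- A map `ψ` (linear in `F`, from order-`d` forms to order-`d` forms, parametrized by the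
coefficient triple `q` of a quadratic `Q`) is *good* if: (ii) each coefficient of `ψ(F,Q)`
is a polynomial function of `q`, homogeneous of degree `d` in `q`; and (iii) `ψ` is
`SL₂(ℂ)`-equivariant: `ψ(F∘g, Q∘g) = ψ(F,Q)∘g`. -/
def GoodMap (d : ℕ) (ψ : (Fin 3 → ℂ) → (Sd d →ₗ[ℂ] Sd d)) : Prop :=
  (∀ F : Sd d, ∀ m : Fin 2 →₀ ℕ, ∃ P : MvPolynomial (Fin 3) ℂ, P.IsHomogeneous d ∧
    ∀ q : Fin 3 → ℂ, coeff m ((ψ q F : MvPolynomial (Fin 2) ℂ)) = eval q P) ∧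
  (∀ g : Matrix (Fin 2) (Fin 2) ℂ, g.det = 1 → ∀ q : Fin 3 → ℂ, ∀ F F' : Sd d,
    (F' : MvPolynomial (Fin 2) ℂ) = act g (F : MvPolynomial (Fin 2) ℂ) →
    ((ψ (qact g q) F' : MvPolynomial (Fin 2) ℂ)) = act g ((ψ q F : MvPolynomial (Fin 2) ℂ)))

/-!
Put `Q₀ = 2x₁x₂`, with coefficient triple `![0, 1, 0]`. Generic quadratics are `SL₂(ℂ)`-translates
of scalar multiples of `Q₀`, so a covariant `ψ` is determined by the operator `F ↦ ψ(F, Q₀)`. The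
torus fixes `Q₀` and separates the monomials `x₁ᵃx₂ᵈ⁻ᵃ`, so this operator is diagonal, with entries
`λ_a` say. The Weyl element maps `Q₀` to `-Q₀` and swaps `a` with `d - a`, which yields
`λ_{d-a} = (-1)ᵈ λ_a`. Hence `λ_0, …, λ_n` determine `ψ`, and the dimension is at most `n + 1`.

Conversely, half the Jacobian of `Q` and `F` is an equivariant derivation `D_Q` of the forms `F`,
linear in `Q`, and `D_{Q₀}` multiplies `x₁ᵃx₂ᵈ⁻ᵃ` by `d - 2a`. The `n + 1` covariants
`disc(Q)ᵏ D_Q^{d-2k}` therefore have diagonal entries `(d - 2a)^{d-2k}`, and a Vandermonde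
determinant shows that they are linearly independent.
-/

section PolynomialFunctions

variable (σ R : Type*) [CommSemiring R]

/-- The functions on `σ → R` given by homogeneous polynomials of degree `n`. -/
noncomputable def homogeneousFunctions (n : ℕ) : Submodule R ((σ → R) → R) :=
  (homogeneousSubmodule σ R n).map (evalₗ R σ)

variable {σ R}

theorem mem_homogeneousFunctions {n : ℕ} {f : (σ → R) → R} :
    f ∈ homogeneousFunctions σ R n ↔
      ∃ P : MvPolynomial σ R, P.IsHomogeneous n ∧ ∀ q, f q = eval q P := by
  simp only [homogeneousFunctions, Submodule.mem_map, mem_homogeneousSubmodule, funext_iff,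
    evalₗ_apply, eq_comm]

theorem mul_mem_homogeneousFunctions {m n : ℕ} {f g : (σ → R) → R}
    (hf : f ∈ homogeneousFunctions σ R m) (hg : g ∈ homogeneousFunctions σ R n) :
    f * g ∈ homogeneousFunctions σ R (m + n) := by
  rw [mem_homogeneousFunctions] at hf hg ⊢
  obtain ⟨P, hP, hfP⟩ := hf
  obtain ⟨S, hS, hgS⟩ := hg
  exact ⟨P * S, hP.mul hS, fun q ↦ by rw [Pi.mul_apply, hfP, hgS, map_mul]⟩

theorem pow_mem_homogeneousFunctions {n : ℕ} {f : (σ → R) → R}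
    (hf : f ∈ homogeneousFunctions σ R n) (k : ℕ) : f ^ k ∈ homogeneousFunctions σ R (n * k) := by
  rw [mem_homogeneousFunctions] at hf ⊢
  obtain ⟨P, hP, hfP⟩ := hf
  exact ⟨P ^ k, hP.pow k, fun q ↦ by rw [Pi.pow_apply, hfP, map_pow]⟩

theorem apply_smul_of_mem_homogeneousFunctions {n : ℕ} {f : (σ → R) → R}
    (hf : f ∈ homogeneousFunctions σ R n) (c : R) (q : σ → R) : f (c • q) = c ^ n * f q := by
  obtain ⟨P, hP, hfP⟩ := mem_homogeneousFunctions.mp hf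
  rw [hfP, hfP, eval_eq, eval_eq, Finset.mul_sum]
  refine Finset.sum_congr rfl fun m hm ↦ ?_
  have hdeg : ∑ i ∈ m.support, m i = n := (hP.degree_eq_sum_deg_support hm).symm
  simp only [Pi.smul_apply, smul_eq_mul, mul_pow, Finset.prod_mul_distrib,
    Finset.prod_pow_eq_pow_sum, hdeg]
  ring

theorem pow_apply_mem_homogeneousFunctions [Finite σ] {M : Type*} [AddCommMonoid M] [Module R M]
    (D : (σ → R) →ₗ[R] Module.End R M) (ℓ : M →ₗ[R] R) (j : ℕ) (x : M) :
    (fun q ↦ ℓ ((D q ^ j) x)) ∈ homogeneousFunctions σ R j := by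
  classical
  cases nonempty_fintype σ
  induction j generalizing x with
  | zero => exact mem_homogeneousFunctions.mpr ⟨C (ℓ x), isHomogeneous_C _ _, by simp⟩
  | succ j ih =>
    have expand : (fun q ↦ ℓ ((D q ^ (j + 1)) x)) =
        ∑ i, (fun q ↦ q i) * fun q ↦ ℓ ((D q ^ j) (D (Pi.single i 1) x)) := by
      funext q
      have hDx : D q x = ∑ i, q i • D (Pi.single i 1) x := by
        conv_lhs => rw [pi_eq_sum_univ' q]
        simp
      simp [pow_succ, hDx]
    rw [expand, add_comm]
    exact Submodule.sum_mem _ fun i _ ↦ mul_mem_homogeneousFunctions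
      (mem_homogeneousFunctions.mpr ⟨X i, isHomogeneous_X R i, by simp⟩) (ih _)

theorem eq_of_eval_eq_of_eval_ne_zero {R : Type*} [CommRing R] [IsDomain R] [Infinite R]
    {D P S : MvPolynomial σ R} (hD : D ≠ 0) (h : ∀ q, eval q D ≠ 0 → eval q P = eval q S) :
    P = S := by
  refine mul_left_cancel₀ hD (MvPolynomial.funext fun q ↦ ?_)
  by_cases hq : eval q D = 0
  · simp [hq]
  · simp [h q hq]

end PolynomialFunctions

theorem derivation_algHom_apply_of_X {σ R A : Type*} [CommSemiring R] [CommSemiring A]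
    [Algebra R A] {f : MvPolynomial σ R →ₐ[R] A}
    {D : Derivation R (MvPolynomial σ R) (MvPolynomial σ R)} {D' : Derivation R A A}
    (h : ∀ i, D' (f (X i)) = f (D (X i))) (p : MvPolynomial σ R) : D' (f p) = f (D p) := by
  induction p using MvPolynomial.induction_on with
  | C a => simp
  | add p r hp hr => simp only [map_add, hp, hr]
  | mul_X p i hp =>
    simp only [map_mul, Derivation.leibniz, smul_eq_mul, hp, h, map_add]

theorem derivation_pow_of_apply_eq_smul {R A : Type*} [CommSemiring R] [CommSemiring A]
    [Algebra R A] {D : Derivation R A A} {x : A} {μ : R} (h : D x = μ • x) (n : ℕ) :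
    D (x ^ n) = (n * μ) • x ^ n := by
  induction n with
  | zero => simp
  | succ n ih =>
    rw [pow_succ, Derivation.leibniz, h, ih, smul_eq_mul, smul_eq_mul, mul_smul_comm,
      mul_smul_comm, mul_comm x, ← add_smul]
    push_cast
    ring_nf

theorem isHomogeneous_mul_pderiv {σ R : Type*} [CommSemiring R] {n : ℕ} {L F : MvPolynomial σ R}
    (hL : L.IsHomogeneous 1) (hF : F.IsHomogeneous n) (i : σ) :
    (L * pderiv i F).IsHomogeneous n := by
  cases n with
  | zero =>
    rw [totalDegree_eq_zero_iff_eq_C.mp (Nat.le_zero.mp hF.totalDegree_le)]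
    simpa using isHomogeneous_zero σ R 0
  | succ n => simpa [add_comm] using hL.mul hF.pderiv

theorem basis_apply_eq_smul_of_commute {ι R M : Type*} [CommRing R] [NoZeroDivisors R]
    [AddCommGroup M] [Module R M] (b : Module.Basis ι R M) {A T : Module.End R M} {μ : ι → R}
    (hμ : Function.Injective μ) (hA : ∀ i, A (b i) = μ i • b i) (hAT : Commute A T) (i : ι) :
    T (b i) = b.repr (T (b i)) i • b i := by
  have repr_A (v : M) (j : ι) : b.repr (A v) j = μ j * b.repr v j := by
    suffices b.coord j ∘ₗ A = μ j • b.coord j from LinearMap.congr_fun this v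
    refine b.ext fun k ↦ ?_
    by_cases hkj : k = j <;> simp [hA, hkj]
  have eigen : A (T (b i)) = μ i • T (b i) := by
    rw [← Module.End.mul_apply, hAT.eq, Module.End.mul_apply, hA, map_smul]
  refine b.ext_elem fun j ↦ ?_
  rcases eq_or_ne i j with rfl | hij
  · simp
  · have hj : (μ j - μ i) * b.repr (T (b i)) j = 0 := by
      rw [sub_mul, ← repr_A, eigen, map_smul, Finsupp.smul_apply, smul_eq_mul, sub_self]
    simpa [hij] using (mul_eq_zero.mp hj).resolve_left (sub_ne_zero.mpr (hμ.ne hij.symm))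

theorem linearIndependent_pow_of_injective {R : Type*} [CommRing R] [IsDomain R] {n : ℕ}
    {v : Fin n → R} (hv : Function.Injective v) :
    LinearIndependent R fun (j : Fin n) (i : Fin n) ↦ v i ^ (j : ℕ) :=
  Matrix.linearIndependent_cols_of_det_ne_zero (Matrix.det_vandermonde_ne_zero_iff.mpr hv)

section MonomialBasis

variable (R : Type*) [CommSemiring R] (d : ℕ)

theorem linearIndependent_X_pow_mul_X_pow :
    LinearIndependent R fun a : Fin (d + 1) ↦
      (X 0 ^ (a : ℕ) * X 1 ^ (d - a) : MvPolynomial (Fin 2) R) := by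
  let e (a : Fin (d + 1)) : Fin 2 →₀ ℕ := Finsupp.single 0 a.1 + Finsupp.single 1 (d - a)
  have he : Function.Injective e := fun a b hab ↦ by
    simpa [e, Fin.ext_iff] using DFunLike.congr_fun hab 0
  have hmono : (fun a : Fin (d + 1) ↦ (X 0 ^ (a : ℕ) * X 1 ^ (d - a) : MvPolynomial (Fin 2) R)) =
      basisMonomials (Fin 2) R ∘ e := by
    funext a
    simp [e, X_pow_eq_monomial, monomial_mul]
  rw [hmono]
  exact (basisMonomials (Fin 2) R).linearIndependent.comp e he

theorem span_X_pow_mul_X_pow :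
    Submodule.span R (Set.range fun a : Fin (d + 1) ↦
      (X 0 ^ (a : ℕ) * X 1 ^ (d - a) : MvPolynomial (Fin 2) R)) =
      homogeneousSubmodule (Fin 2) R d := by
  refine le_antisymm (Submodule.span_le.mpr ?_) fun p hp ↦ ?_
  · rintro _ ⟨a, rfl⟩
    simpa [Nat.add_sub_cancel' a.is_le] using
      (isHomogeneous_X_pow (R := R) (0 : Fin 2) a).mul (isHomogeneous_X_pow 1 (d - a))
  · rw [p.as_sum]
    refine Submodule.sum_mem _ fun m hm ↦ ?_
    have hdeg : d = m 0 + m 1 := by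
      rw [← Fin.sum_univ_two, ← Finsupp.degree_eq_sum]
      exact IsHomogeneous.degree_eq_sum_deg_support hp hm
    have hmono : monomial m (coeff m p) = coeff m p • (X 0 ^ m 0 * X 1 ^ (d - m 0)) := by
      rw [monomial_eq, Finsupp.prod_fintype _ _ (by simp), Fin.prod_univ_two, smul_eq_C_mul, hdeg,
        Nat.add_sub_cancel_left]
    rw [hmono]
    exact Submodule.smul_mem _ _ (Submodule.subset_span ⟨⟨m 0, by omega⟩, rfl⟩)

/-- The basis `x₁ᵃ x₂ᵈ⁻ᵃ`, `0 ≤ a ≤ d`, of the space of binary forms of order `d`. -/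
noncomputable def monomialBasis : Module.Basis (Fin (d + 1)) R (homogeneousSubmodule (Fin 2) R d) :=
  (Module.Basis.span (linearIndependent_X_pow_mul_X_pow R d)).map
    (LinearEquiv.ofEq _ _ (span_X_pow_mul_X_pow R d))

theorem coe_monomialBasis (a : Fin (d + 1)) :
    (monomialBasis R d a : MvPolynomial (Fin 2) R) = X 0 ^ (a : ℕ) * X 1 ^ (d - a) := by
  simp [monomialBasis, Module.Basis.span_apply]

end MonomialBasis

section Substitution

/-- The substitution `act g` as an algebra homomorphism. -/
noncomputable def actHom (g : Matrix (Fin 2) (Fin 2) ℂ) :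
    MvPolynomial (Fin 2) ℂ →ₐ[ℂ] MvPolynomial (Fin 2) ℂ :=
  aeval fun i ↦ C (g i 0) * X 0 + C (g i 1) * X 1

theorem actHom_X (g : Matrix (Fin 2) (Fin 2) ℂ) (i : Fin 2) :
    actHom g (X i) = C (g i 0) * X 0 + C (g i 1) * X 1 :=
  aeval_X _ i

theorem isHomogeneous_actHom (g : Matrix (Fin 2) (Fin 2) ℂ) {d : ℕ} {F : MvPolynomial (Fin 2) ℂ}
    (hF : F.IsHomogeneous d) : (actHom g F).IsHomogeneous d := by
  rw [← one_mul d]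
  exact hF.aeval (fun i ↦ C (g i 0) * X 0 + C (g i 1) * X 1) fun i ↦
    (isHomogeneous_C_mul_X _ _).add (isHomogeneous_C_mul_X _ _)

/-- The substitution `F ↦ F∘g` on binary forms of order `d`. -/
noncomputable def formAct (d : ℕ) (g : Matrix (Fin 2) (Fin 2) ℂ) : Module.End ℂ (Sd d) :=
  (actHom g).toLinearMap.restrict fun _ hF ↦ isHomogeneous_actHom g hF

theorem coe_formAct {d : ℕ} (g : Matrix (Fin 2) (Fin 2) ℂ) (F : Sd d) :
    (formAct d g F : MvPolynomial (Fin 2) ℂ) = actHom g F :=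
  rfl

theorem formAct_one (d : ℕ) : formAct d 1 = 1 := by
  have h : actHom 1 = AlgHom.id ℂ _ := algHom_ext fun i ↦ by fin_cases i <;> simp [actHom_X]
  ext1 F
  exact Subtype.ext (DFunLike.congr_fun h F.1)

theorem formAct_mul (d : ℕ) (g h : Matrix (Fin 2) (Fin 2) ℂ) :
    formAct d (g * h) = formAct d h * formAct d g := by
  have hcomp : actHom (g * h) = (actHom h).comp (actHom g) := algHom_ext fun i ↦ by
    simp only [AlgHom.comp_apply, actHom_X, map_add, map_mul, algHom_C, algebraMap_eq,
      Matrix.mul_apply, Fin.sum_univ_two]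
    ring
  ext1 F
  exact Subtype.ext (DFunLike.congr_fun hcomp F.1)

theorem isUnit_formAct (d : ℕ) {g : Matrix (Fin 2) (Fin 2) ℂ} (hg : IsUnit g.det) :
    IsUnit (formAct d g) :=
  isUnit_iff_exists.mpr ⟨formAct d g⁻¹,
    by rw [← formAct_mul, Matrix.nonsing_inv_mul g hg, formAct_one],
    by rw [← formAct_mul, Matrix.mul_nonsing_inv g hg, formAct_one]⟩

theorem formAct_diagonal_monomialBasis {d : ℕ} (s t : ℂ) (a : Fin (d + 1)) :
    formAct d !![s, 0; 0, t] (monomialBasis ℂ d a) =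
      (s ^ (a : ℕ) * t ^ (d - a)) • monomialBasis ℂ d a := by
  apply Subtype.ext
  simp only [coe_formAct, Submodule.coe_smul, coe_monomialBasis, map_mul, map_pow, actHom_X,
    smul_eq_C_mul]
  simp only [Matrix.of_apply, Matrix.cons_val', Matrix.cons_val, C_0, zero_mul, add_zero, zero_add,
    mul_pow]
  ring

theorem formAct_weyl_monomialBasis {d : ℕ} (a : Fin (d + 1)) :
    formAct d !![0, 1; -1, 0] (monomialBasis ℂ d a) =
      (-1 : ℂ) ^ (d - a) • monomialBasis ℂ d a.rev := by
  have hrev : (a.rev : ℕ) = d - a := by rw [Fin.val_rev]; omega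
  apply Subtype.ext
  simp only [coe_formAct, Submodule.coe_smul, coe_monomialBasis, map_mul, map_pow, actHom_X,
    smul_eq_C_mul, hrev, Nat.sub_sub_self a.is_le]
  simp only [Matrix.of_apply, Matrix.cons_val', Matrix.cons_val, C_0, C_1, C_neg, zero_mul, one_mul,
    neg_mul, add_zero, zero_add, neg_pow (X 0 : MvPolynomial (Fin 2) ℂ)]
  ring

end Substitution

section Jacobian

/-- The discriminant of `Q = q₀x₁² + 2q₁x₁x₂ + q₂x₂²`, up to a factor `4`. -/
def disc (q : Fin 3 → ℂ) : ℂ :=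
  q 1 ^ 2 - q 0 * q 2

theorem disc_mem_homogeneousFunctions : disc ∈ homogeneousFunctions (Fin 3) ℂ 2 :=
  mem_homogeneousFunctions.mpr ⟨X 1 ^ 2 - X 0 * X 2,
    (isHomogeneous_X_pow 1 2).sub ((isHomogeneous_X ℂ 0).mul (isHomogeneous_X ℂ 2)),
    by simp [disc]⟩

theorem disc_qact {g : Matrix (Fin 2) (Fin 2) ℂ} (hg : g.det = 1) (q : Fin 3 → ℂ) :
    disc (qact g q) = disc q := by
  rw [Matrix.det_fin_two] at hg
  simp only [disc, qact, Matrix.cons_val]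
  linear_combination (g 0 0 * g 1 1 - g 0 1 * g 1 0 + 1) * (q 1 ^ 2 - q 0 * q 2) * hg

/-- Half the Jacobian determinant `F ↦ (Q_{x₁} F_{x₂} - Q_{x₂} F_{x₁}) / 2` with the quadratic of
coefficient triple `q`; as `q` varies, these derivations form a copy of the Lie algebra `𝔰𝔩₂`. -/
noncomputable def jacobian (q : Fin 3 → ℂ) :
    Derivation ℂ (MvPolynomial (Fin 2) ℂ) (MvPolynomial (Fin 2) ℂ) :=
  (C (q 0) * X 0 + C (q 1) * X 1 : MvPolynomial (Fin 2) ℂ) • pderiv 1 -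
    (C (q 1) * X 0 + C (q 2) * X 1 : MvPolynomial (Fin 2) ℂ) • pderiv 0

theorem jacobian_apply (q : Fin 3 → ℂ) (F : MvPolynomial (Fin 2) ℂ) :
    jacobian q F = (C (q 0) * X 0 + C (q 1) * X 1) * pderiv 1 F -
      (C (q 1) * X 0 + C (q 2) * X 1) * pderiv 0 F :=
  rfl

theorem jacobian_X_zero (q : Fin 3 → ℂ) :
    jacobian q (X 0) = -(C (q 1) * X 0 + C (q 2) * X 1) := by
  simp [jacobian_apply]

theorem jacobian_X_one (q : Fin 3 → ℂ) : jacobian q (X 1) = C (q 0) * X 0 + C (q 1) * X 1 := by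
  simp [jacobian_apply]

theorem jacobian_qact_actHom {g : Matrix (Fin 2) (Fin 2) ℂ} (hg : g.det = 1) (q : Fin 3 → ℂ)
    (F : MvPolynomial (Fin 2) ℂ) :
    jacobian (qact g q) (actHom g F) = actHom g (jacobian q F) := by
  have hdet : C (g 0 0) * C (g 1 1) - C (g 0 1) * C (g 1 0) = (1 : MvPolynomial (Fin 2) ℂ) := by
    rw [← C_mul, ← C_mul, ← C_sub, ← Matrix.det_fin_two, hg, C_1]
  have hC2 : (C 2 : MvPolynomial (Fin 2) ℂ) = 2 := map_ofNat C 2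
  refine derivation_algHom_apply_of_X (fun i ↦ ?_) F
  have expand : jacobian (qact g q) (actHom g (X i)) =
      C (g i 0) * jacobian (qact g q) (X 0) + C (g i 1) * jacobian (qact g q) (X 1) := by
    simp [actHom_X, Derivation.leibniz]
  rw [expand, jacobian_X_zero, jacobian_X_one]
  fin_cases i
  · simp only [Fin.zero_eta, jacobian_X_zero, map_neg, map_add, map_mul, algHom_C, algebraMap_eq,
      actHom_X, qact, Matrix.cons_val, C_pow, hC2]
    linear_combination (-(C (q 1) * (C (g 0 0) * X 0 + C (g 0 1) * X 1) +
      C (q 2) * (C (g 1 0) * X 0 + C (g 1 1) * X 1))) * hdet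
  · simp only [Fin.mk_one, jacobian_X_one, map_add, map_mul, algHom_C, algebraMap_eq, actHom_X,
      qact, Matrix.cons_val, C_pow, hC2]
    linear_combination (C (q 0) * (C (g 0 0) * X 0 + C (g 0 1) * X 1) +
      C (q 1) * (C (g 1 0) * X 0 + C (g 1 1) * X 1)) * hdet

theorem isHomogeneous_jacobian (q : Fin 3 → ℂ) {d : ℕ} {F : MvPolynomial (Fin 2) ℂ}
    (hF : F.IsHomogeneous d) : (jacobian q F).IsHomogeneous d :=
  have linear (a b : ℂ) : (C a * X 0 + C b * X 1 : MvPolynomial (Fin 2) ℂ).IsHomogeneous 1 :=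
    (isHomogeneous_C_mul_X a 0).add (isHomogeneous_C_mul_X b 1)
  (isHomogeneous_mul_pderiv (linear _ _) hF 1).sub (isHomogeneous_mul_pderiv (linear _ _) hF 0)

/-- The operator `jacobian q` on forms of order `d`, as a linear function of `q`. -/
noncomputable def formJacobian (d : ℕ) : (Fin 3 → ℂ) →ₗ[ℂ] Module.End ℂ (Sd d) where
  toFun q := (jacobian q).toLinearMap.restrict fun _ hF ↦ isHomogeneous_jacobian q hF
  map_add' q r := by
    ext1 F
    apply Subtype.ext
    change jacobian (q + r) F = jacobian q F + jacobian r F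
    simp only [jacobian_apply, Pi.add_apply, C_add]
    ring
  map_smul' c q := by
    ext1 F
    apply Subtype.ext
    change jacobian (c • q) F = c • jacobian q F
    simp only [jacobian_apply, Pi.smul_apply, smul_eq_mul, C_mul, smul_eq_C_mul]
    ring

theorem coe_formJacobian {d : ℕ} (q : Fin 3 → ℂ) (F : Sd d) :
    (formJacobian d q F : MvPolynomial (Fin 2) ℂ) = jacobian q F :=
  rfl

theorem semiconjBy_formAct_formJacobian (d : ℕ) {g : Matrix (Fin 2) (Fin 2) ℂ} (hg : g.det = 1)
    (q : Fin 3 → ℂ) :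
    SemiconjBy (formAct d g) (formJacobian d q) (formJacobian d (qact g q)) := by
  ext1 F
  exact Subtype.ext (jacobian_qact_actHom hg q F.1).symm

theorem formJacobian_monomialBasis {d : ℕ} (a : Fin (d + 1)) :
    formJacobian d ![0, 1, 0] (monomialBasis ℂ d a) = ((d : ℂ) - 2 * a) • monomialBasis ℂ d a := by
  have hX0 : jacobian ![0, 1, 0] (X 0) = (-1 : ℂ) • X 0 := by simp [jacobian_X_zero]
  have hX1 : jacobian ![0, 1, 0] (X 1) = (1 : ℂ) • X 1 := by simp [jacobian_X_one]
  apply Subtype.ext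
  rw [coe_formJacobian, Submodule.coe_smul, coe_monomialBasis, Derivation.leibniz,
    derivation_pow_of_apply_eq_smul hX0, derivation_pow_of_apply_eq_smul hX1, smul_comm,
    smul_eq_mul, smul_comm (X 1 ^ (d - (a : ℕ))), smul_eq_mul, mul_comm (X 1 ^ (d - (a : ℕ))),
    ← add_smul, Nat.cast_sub a.is_le]
  congr 1
  ring

end Jacobian

section Covariants

variable {d : ℕ} {ψ φ : (Fin 3 → ℂ) → Module.End ℂ (Sd d)}

theorem goodMap_iff : GoodMap d ψ ↔
    (∀ F m, (fun q ↦ lcoeff ℂ m (ψ q F : MvPolynomial (Fin 2) ℂ)) ∈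
      homogeneousFunctions (Fin 3) ℂ d) ∧
    ∀ g : Matrix (Fin 2) (Fin 2) ℂ, g.det = 1 →
      ∀ q, SemiconjBy (formAct d g) (ψ q) (ψ (qact g q)) := by
  simp only [GoodMap, mem_homogeneousFunctions, lcoeff_apply]
  refine and_congr Iff.rfl (forall₃_congr fun g _ q ↦ ⟨fun h ↦ ?_, fun h F F' hF' ↦ ?_⟩)
  · ext1 F
    exact Subtype.ext (h F (formAct d g F) rfl).symm
  · obtain rfl : F' = formAct d g F := Subtype.ext hF'
    exact congrArg Subtype.val (LinearMap.congr_fun h.eq F).symm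

variable (d) in
/-- The space of covariants `ψ` of order `d` and bidegree `(1, d)` in `(F, Q)`. -/
def covariants : Submodule ℂ ((Fin 3 → ℂ) → Module.End ℂ (Sd d)) where
  carrier := {ψ | GoodMap d ψ}
  zero_mem' := goodMap_iff.mpr
    ⟨fun _ _ ↦ Submodule.zero_mem _, fun _ _ _ ↦ SemiconjBy.zero_right _⟩
  add_mem' hψ hφ :=
    have ⟨hψ_coeff, hψ_act⟩ := goodMap_iff.mp hψ
    have ⟨hφ_coeff, hφ_act⟩ := goodMap_iff.mp hφ
    goodMap_iff.mpr ⟨fun F m ↦ Submodule.add_mem _ (hψ_coeff F m) (hφ_coeff F m),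
      fun g hg q ↦ (hψ_act g hg q).add_right (hφ_act g hg q)⟩
  smul_mem' c _ hψ :=
    have ⟨hψ_coeff, hψ_act⟩ := goodMap_iff.mp hψ
    goodMap_iff.mpr ⟨fun F m ↦ Submodule.smul_mem _ c (hψ_coeff F m),
      fun g hg q ↦ (hψ_act g hg q).smul_right c⟩

theorem span_goodMap (d : ℕ) : Submodule.span ℂ {ψ | GoodMap d ψ} = covariants d :=
  Submodule.span_eq (covariants d)

/-- The covariant `disc(Q)ᵏ D_Q^{d - 2k} F` of bidegree `(1, d)`, where `D_Q` is the operator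
`formJacobian d q`. As subtraction is truncated, the degree is right only for `2 * k ≤ d`. -/
noncomputable def powerCovariant (d k : ℕ) (q : Fin 3 → ℂ) : Module.End ℂ (Sd d) :=
  disc q ^ k • formJacobian d q ^ (d - 2 * k)

theorem powerCovariant_mem_covariants {d k : ℕ} (hk : 2 * k ≤ d) :
    powerCovariant d k ∈ covariants d := by
  refine goodMap_iff.mpr ⟨fun F m ↦ ?_, fun g hg q ↦ ?_⟩
  · have hmul := mul_mem_homogeneousFunctions
      (pow_mem_homogeneousFunctions disc_mem_homogeneousFunctions k)
      (pow_apply_mem_homogeneousFunctions (formJacobian d) (lcoeff ℂ m ∘ₗ (Sd d).subtype)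
        (d - 2 * k) F)
    rwa [Nat.add_sub_cancel' hk] at hmul
  · rw [powerCovariant, powerCovariant, disc_qact hg]
    exact ((semiconjBy_formAct_formJacobian d hg q).pow_right _).smul_right _

theorem powerCovariant_monomialBasis (d k : ℕ) (a : Fin (d + 1)) :
    powerCovariant d k ![0, 1, 0] (monomialBasis ℂ d a) =
      ((d : ℂ) - 2 * a) ^ (d - 2 * k) • monomialBasis ℂ d a := by
  have heigen : (formJacobian d ![0, 1, 0]).HasEigenvector ((d : ℂ) - 2 * a)
      (monomialBasis ℂ d a) :=
    ⟨Module.End.mem_eigenspace_iff.mpr (formJacobian_monomialBasis a),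
      (monomialBasis ℂ d).ne_zero a⟩
  simp [powerCovariant, disc, heigen.pow_apply]

/-- The diagonal entries, in the monomial basis, of `F ↦ ψ(F, 2x₁x₂)`. -/
noncomputable def diagEntries (d : ℕ) :
    ((Fin 3 → ℂ) → Module.End ℂ (Sd d)) →ₗ[ℂ] (Fin (d + 1) → ℂ) :=
  LinearMap.pi fun a ↦
    (monomialBasis ℂ d).coord a ∘ₗ LinearMap.applyₗ (monomialBasis ℂ d a) ∘ₗ
      LinearMap.proj ![0, 1, 0]

theorem diagEntries_apply (ψ : (Fin 3 → ℂ) → Module.End ℂ (Sd d)) (a : Fin (d + 1)) :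
    diagEntries d ψ a =
      (monomialBasis ℂ d).repr (ψ ![0, 1, 0] (monomialBasis ℂ d a)) a :=
  rfl

theorem diagEntries_powerCovariant (d k : ℕ) :
    diagEntries d (powerCovariant d k) =
      fun a : Fin (d + 1) ↦ ((d : ℂ) - 2 * (a : ℕ)) ^ (d - 2 * k) := by
  funext a
  simp [diagEntries_apply, powerCovariant_monomialBasis]

theorem linearIndependent_powerCovariant (d : ℕ) :
    LinearIndependent ℂ fun k : Fin (d / 2 + 1) ↦ powerCovariant d k := by
  have hnodes : Function.Injective fun a : Fin (d + 1) ↦ (d : ℂ) - 2 * (a : ℕ) := fun a b hab ↦ by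
    simpa [Fin.ext_iff] using hab
  have hexp : Function.Injective fun k : Fin (d / 2 + 1) ↦
      (⟨d - 2 * k, by omega⟩ : Fin (d + 1)) := fun k l hkl ↦ by
    simp only [Fin.mk.injEq] at hkl
    omega
  refine LinearIndependent.of_comp (diagEntries d) ?_
  have hcomp := (linearIndependent_pow_of_injective hnodes).comp _ hexp
  simpa only [Function.comp_def, diagEntries_powerCovariant] using hcomp

theorem apply_smul_of_mem_covariants (hψ : ψ ∈ covariants d) (c : ℂ) (q : Fin 3 → ℂ) :
    ψ (c • q) = c ^ d • ψ q := by
  ext F m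
  exact apply_smul_of_mem_homogeneousFunctions ((goodMap_iff.mp hψ).1 F m) c q

theorem injective_two_pow_mul_inv_two_pow (d : ℕ) :
    Function.Injective fun a : Fin (d + 1) ↦ (2 : ℂ) ^ (a : ℕ) * 2⁻¹ ^ (d - a) := fun a b hab ↦ by
  have hsplit (a : Fin (d + 1)) : (2 : ℂ) ^ (a : ℕ) * 2⁻¹ ^ (d - a) = 4 ^ (a : ℕ) / 2 ^ d := by
    rw [inv_pow, ← div_eq_mul_inv, div_eq_div_iff (by simp) (by simp),
      show (4 : ℂ) = 2 ^ 2 by norm_num, ← pow_mul, ← pow_add, ← pow_add]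
    congr 1
    omega
  have hpow : (4 : ℂ) ^ (a : ℕ) = 4 ^ (b : ℕ) := by
    simpa only [hsplit, div_left_inj' (pow_ne_zero d (two_ne_zero' ℂ))] using hab
  exact Fin.ext (Nat.pow_right_injective (show 2 ≤ 4 by norm_num) (by exact_mod_cast hpow))

theorem apply_monomialBasis_of_mem_covariants (hψ : ψ ∈ covariants d) (a : Fin (d + 1)) :
    ψ ![0, 1, 0] (monomialBasis ℂ d a) = diagEntries d ψ a • monomialBasis ℂ d a := by
  have hfix : qact !![2, 0; 0, 2⁻¹] ![0, 1, 0] = ![0, 1, 0] := by simp [qact]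
  have hcomm : Commute (formAct d !![2, 0; 0, 2⁻¹]) (ψ ![0, 1, 0]) := by
    have := (goodMap_iff.mp hψ).2 !![2, 0; 0, 2⁻¹] (by simp [Matrix.det_fin_two]) ![0, 1, 0]
    rwa [hfix] at this
  exact basis_apply_eq_smul_of_commute _ (injective_two_pow_mul_inv_two_pow d)
    (formAct_diagonal_monomialBasis 2 2⁻¹) hcomm a

theorem diagEntries_rev (hψ : ψ ∈ covariants d) (a : Fin (d + 1)) :
    diagEntries d ψ a.rev = (-1) ^ d * diagEntries d ψ a := by
  have hq : qact !![0, 1; -1, 0] ![0, 1, 0] = (-1 : ℂ) • ![0, 1, 0] := by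
    ext i; fin_cases i <;> simp [qact]
  have hsemi := (goodMap_iff.mp hψ).2 !![0, 1; -1, 0] (by simp [Matrix.det_fin_two]) ![0, 1, 0]
  rw [hq, apply_smul_of_mem_covariants hψ] at hsemi
  have h := LinearMap.congr_fun hsemi.eq (monomialBasis ℂ d a)
  simp only [Module.End.mul_apply, LinearMap.smul_apply, apply_monomialBasis_of_mem_covariants hψ,
    formAct_weyl_monomialBasis, map_smul, smul_smul] at h
  have hcoeff := smul_left_injective ℂ ((monomialBasis ℂ d).ne_zero a.rev) h
  have hsign : (-1 : ℂ) ^ d * (-1) ^ d = 1 := by rw [← mul_pow]; simp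
  have hcancel : diagEntries d ψ a = (-1) ^ d * diagEntries d ψ a.rev :=
    mul_left_cancel₀ (pow_ne_zero (d - a) (neg_ne_zero.mpr one_ne_zero))
      ((mul_comm _ _).trans hcoeff)
  rw [hcancel, ← mul_assoc, hsign, one_mul]

theorem apply_qact_eq (hψ : ψ ∈ covariants d) (hφ : φ ∈ covariants d)
    {g : Matrix (Fin 2) (Fin 2) ℂ} (hg : g.det = 1) {q : Fin 3 → ℂ} (hq : ψ q = φ q) :
    ψ (qact g q) = φ (qact g q) := by
  refine (isUnit_formAct d (hg ▸ isUnit_one)).mul_right_cancel ?_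
  rw [← ((goodMap_iff.mp hψ).2 g hg q).eq, ← ((goodMap_iff.mp hφ).2 g hg q).eq, hq]

theorem exists_qact_smul_eq {q : Fin 3 → ℂ} (hq : q 0 ≠ 0) (hdisc : disc q ≠ 0) :
    ∃ (g : Matrix (Fin 2) (Fin 2) ℂ) (s : ℂ), g.det = 1 ∧ qact g (s • ![0, 1, 0]) = q := by
  obtain ⟨s, hs⟩ : ∃ s : ℂ, s ^ 2 = disc q := IsAlgClosed.exists_pow_nat_eq _ two_pos
  have hs0 : s ≠ 0 := fun h ↦ hdisc (by rw [← hs, h, zero_pow two_ne_zero])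
  refine ⟨!![1, (q 1 - s) / q 0; q 0 / (2 * s), (q 1 + s) / (2 * s)], s, ?_, ?_⟩
  · rw [Matrix.det_fin_two_of]
    field_simp
    ring
  · rw [disc] at hs
    ext i
    fin_cases i <;>
      simp only [qact, Pi.smul_apply, smul_eq_mul, Matrix.of_apply, Matrix.cons_val',
        Matrix.cons_val, Fin.zero_eta, Fin.mk_one, Fin.reduceFinMk, mul_zero, zero_mul,
        zero_add, add_zero, mul_one, one_mul] <;>
      field_simp
    · ring
    · linear_combination -hs

theorem eq_of_mem_covariants_of_apply_eq (hψ : ψ ∈ covariants d) (hφ : φ ∈ covariants d)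
    (h : ψ ![0, 1, 0] = φ ![0, 1, 0]) : ψ = φ := by
  have hgeneric (q : Fin 3 → ℂ) (hq : q 0 ≠ 0) (hdisc : disc q ≠ 0) : ψ q = φ q := by
    obtain ⟨g, s, hg, rfl⟩ := exists_qact_smul_eq hq hdisc
    refine apply_qact_eq hψ hφ hg ?_
    rw [apply_smul_of_mem_covariants hψ, apply_smul_of_mem_covariants hφ, h]
  have hne : (X 0 * (X 1 ^ 2 - X 0 * X 2) : MvPolynomial (Fin 3) ℂ) ≠ 0 := fun h ↦ by
    simpa using congrArg (eval ![1, 1, 0]) h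
  ext q F m
  obtain ⟨P, -, hP⟩ := mem_homogeneousFunctions.mp ((goodMap_iff.mp hψ).1 F m)
  obtain ⟨S, -, hS⟩ := mem_homogeneousFunctions.mp ((goodMap_iff.mp hφ).1 F m)
  have hPS : P = S := eq_of_eval_eq_of_eval_ne_zero hne fun r hr ↦ by
    have hr' : r 0 ≠ 0 ∧ disc r ≠ 0 := by simpa [disc] using hr
    rw [← hP, ← hS, hgeneric r hr'.1 hr'.2]
  exact (hP q).trans (hPS ▸ (hS q).symm)

theorem eq_of_mem_covariants_of_diagEntries_eq (hψ : ψ ∈ covariants d) (hφ : φ ∈ covariants d)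
    (h : ∀ a : Fin (d + 1), (a : ℕ) ≤ d / 2 → diagEntries d ψ a = diagEntries d φ a) : ψ = φ := by
  have hall (a : Fin (d + 1)) : diagEntries d ψ a = diagEntries d φ a := by
    rcases le_or_gt (a : ℕ) (d / 2) with ha | ha
    · exact h a ha
    · rw [← Fin.rev_rev a, diagEntries_rev hψ, diagEntries_rev hφ,
        h _ (by rw [Fin.val_rev]; omega)]
  refine eq_of_mem_covariants_of_apply_eq hψ hφ ((monomialBasis ℂ d).ext fun a ↦ ?_)
  rw [apply_monomialBasis_of_mem_covariants hψ, apply_monomialBasis_of_mem_covariants hφ, hall]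

/-- The first half of the diagonal entries of a covariant; the symmetry `diagEntries_rev`
determines the others. -/
noncomputable def firstDiagEntries (d : ℕ) : covariants d →ₗ[ℂ] (Fin (d / 2 + 1) → ℂ) :=
  LinearMap.funLeft ℂ ℂ (Fin.castLE (by omega)) ∘ₗ (diagEntries d).domRestrict (covariants d)

theorem injective_firstDiagEntries (d : ℕ) : Function.Injective (firstDiagEntries d) :=
  fun ψ φ h ↦ Subtype.ext <| eq_of_mem_covariants_of_diagEntries_eq ψ.2 φ.2 fun a ha ↦
    congrFun h ⟨a, Nat.lt_succ_of_le ha⟩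

end Covariants

/-- the space of equivariant maps `ψ : S_d × S_2 → S_d`, linear in the first
argument and of polynomial degree `d` in the quadratic, has dimension `⌊d/2⌋ + 1`. -/
theorem stmt14 (d : ℕ) (hd : 1 ≤ d) :
    Set.finrank ℂ {ψ : (Fin 3 → ℂ) → (Sd d →ₗ[ℂ] Sd d) | GoodMap d ψ} = d / 2 + 1 := by
  rw [Set.finrank, span_goodMap]
  have : Module.Finite ℂ (covariants d) :=
    Module.Finite.of_injective _ (injective_firstDiagEntries d)
  have hindep : LinearIndependent ℂ fun k : Fin (d / 2 + 1) ↦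
      (⟨powerCovariant d k, powerCovariant_mem_covariants (by omega)⟩ : covariants d) :=
    LinearIndependent.of_comp (covariants d).subtype (linearIndependent_powerCovariant d)
  apply le_antisymm
  · simpa using LinearMap.finrank_le_finrank_of_injective (injective_firstDiagEntries d)
  · simpa using hindep.fintype_card_le_finrank
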